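/- Let G be a finite simple chordal graph and let B be an induced complete bipartite subgraph of G with parts B_X = {x} and B_Y = {y_1,...,y_k}. If w_1 and w_2 are two adjacent vertices in M_2(B_X) ∪ M_2(B_Y), then f(w_1) ⊆ f(w_2) or f(w_2) ⊆ f(w_1). -/

import Mathlib

open SimpleGraph

/-- `N₁(S)`: the set of vertices at distance exactly 1 from the vertex set `S`. -/
def nOne {V : Type*} (G : SimpleGraph V) (S : Set V) : Set V :=
  {v | v ∉ S ∧ ∃ s ∈ S, G.Adj v s}

/-- `N₂(S)`: the set of vertices at distance exactly 2 from the vertex set `S`. -/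
def nTwo {V : Type*} (G : SimpleGraph V) (S : Set V) : Set V :=
  {v | v ∉ S ∧ (∀ s ∈ S, ¬ G.Adj v s) ∧ ∃ u, G.Adj v u ∧ ∃ s ∈ S, G.Adj u s}

/-- A graph is chordal if every induced cycle is a triangle, i.e. it has no
induced cycle of length at least 4. -/
def IsChordal {V : Type*} (G : SimpleGraph V) : Prop :=
  ∀ n : ℕ, 4 ≤ n → ∀ s : Set V, IsEmpty (G.induce s ≃g cycleGraph n)

/-- A set of vertices is independent if its elements are pairwise nonadjacent. -/
def IsIndepSet {V : Type*} (G : SimpleGraph V) (S : Set V) : Prop :=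
  S.Pairwise fun a b => ¬ G.Adj a b

/-- `B` is an induced complete bipartite subgraph of `G` with parts `B_X = {x}` and
`B_Y = Y`: `Y` is a nonempty independent set not containing `x`, and `x` is adjacent
to every vertex of `Y`. -/
def IsInducedStar {V : Type*} (G : SimpleGraph V) (x : V) (Y : Set V) : Prop :=
  Y.Nonempty ∧ x ∉ Y ∧ (∀ y ∈ Y, G.Adj x y) ∧ ∀ y₁ ∈ Y, ∀ y₂ ∈ Y, ¬ G.Adj y₁ y₂

/-- `M₁(B_X) = N₁(B_X) ∩ N₂(B_Y)` where `B_X = {x}` and `B_Y = Y`. -/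
def M1X {V : Type*} (G : SimpleGraph V) (x : V) (Y : Set V) : Set V :=
  nOne G {x} ∩ nTwo G Y

/-- `M₁(B_Y) = N₁(B_Y) ∩ N₂(B_X)`. -/
def M1Y {V : Type*} (G : SimpleGraph V) (x : V) (Y : Set V) : Set V :=
  nOne G Y ∩ nTwo G {x}

/-- `M₂(B_X) = N₁(M₁(B_X)) ∩ N₂(B_X)`. -/
def M2X {V : Type*} (G : SimpleGraph V) (x : V) (Y : Set V) : Set V :=
  nOne G (M1X G x Y) ∩ nTwo G {x}

/-- `M₂(B_Y) = N₁(M₁(B_Y)) ∩ N₂(B_Y)`. -/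
def M2Y {V : Type*} (G : SimpleGraph V) (x : V) (Y : Set V) : Set V :=
  nOne G (M1Y G x Y) ∩ nTwo G Y

/-- `M₁(B) = M₁(B_X) ∪ M₁(B_Y)`. -/
def M1B {V : Type*} (G : SimpleGraph V) (x : V) (Y : Set V) : Set V :=
  M1X G x Y ∪ M1Y G x Y

/-- `M₂(B) = M₂(B_X) ∪ M₂(B_Y)`. -/
def M2B {V : Type*} (G : SimpleGraph V) (x : V) (Y : Set V) : Set V :=
  M2X G x Y ∪ M2Y G x Y

/-- `f(S) = N₁(S) ∩ M₁(B)`. -/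
def fSet {V : Type*} (G : SimpleGraph V) (x : V) (Y : Set V) (S : Set V) : Set V :=
  nOne G S ∩ M1B G x Y

theorem no_emb {V : Type*} {G : SimpleGraph V} (hG : IsChordal G) (n : ℕ) (hn : 4 ≤ n)
    (f : Fin n → V) (hf : Function.Injective f)
    (h : ∀ i j, G.Adj (f i) (f j) ↔ (cycleGraph n).Adj i j) : False := by
  refine (hG n hn (Set.range f)).false ?_
  refine RelIso.symm ⟨Equiv.ofInjective f hf, ?_⟩
  intro a b
  exact h a b

theorem noC4 {V : Type*} {G : SimpleGraph V} (hG : IsChordal G) (a b c d : V)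
    (hab : G.Adj a b) (hac : ¬ G.Adj a c) (had : G.Adj a d) (hbc : G.Adj b c) (hbd : ¬ G.Adj b d) (hcd : G.Adj c d) (nac : a ≠ c) (nbd : b ≠ d) : False := by
  have key : ∀ i j, G.Adj (![a, b, c, d] i) (![a, b, c, d] j) ↔ (cycleGraph 4).Adj i j := by
    have hlt : ∀ i j, i < j → (G.Adj (![a, b, c, d] i) (![a, b, c, d] j) ↔ (cycleGraph 4).Adj i j) := by
      intro i j hij
      fin_cases i <;> fin_cases j <;> first
        | exact absurd hij (by decide)
        | exact iff_of_true (by assumption) (by decide)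
        | exact iff_of_false (by assumption) (by decide)
    intro i j
    rcases lt_trichotomy i j with hij | hij | hij
    · exact hlt i j hij
    · subst hij
      simp
    · rw [G.adj_comm, (cycleGraph 4).adj_comm]
      exact hlt j i hij
  refine no_emb hG 4 (by norm_num) ![a, b, c, d] ?_ key
  · skip
    intro i j hij
    have n1 := hab.ne
    have n2 := hbc.ne
    have n3 := hcd.ne
    have n4 := had.ne
    fin_cases i <;> fin_cases j <;> simp_all

theorem noC5 {V : Type*} {G : SimpleGraph V} (hG : IsChordal G) (a b c d e : V)
    (hab : G.Adj a b) (hac : ¬ G.Adj a c) (had : ¬ G.Adj a d) (hae : G.Adj a e) (hbc : G.Adj b c) (hbd : ¬ G.Adj b d) (hbe : ¬ G.Adj b e) (hcd : G.Adj c d) (hce : ¬ G.Adj c e) (hde : G.Adj d e)  : False := by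
  have key : ∀ i j, G.Adj (![a, b, c, d, e] i) (![a, b, c, d, e] j) ↔ (cycleGraph 5).Adj i j := by
    have hlt : ∀ i j, i < j → (G.Adj (![a, b, c, d, e] i) (![a, b, c, d, e] j) ↔ (cycleGraph 5).Adj i j) := by
      intro i j hij
      fin_cases i <;> fin_cases j <;> first
        | exact absurd hij (by decide)
        | exact iff_of_true (by assumption) (by decide)
        | exact iff_of_false (by assumption) (by decide)
    intro i j
    rcases lt_trichotomy i j with hij | hij | hij
    · exact hlt i j hij
    · subst hij
      simp
    · rw [G.adj_comm, (cycleGraph 5).adj_comm]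
      exact hlt j i hij
  refine no_emb hG 5 (by norm_num) ![a, b, c, d, e] ?_ key
  · skip
    intro i j hij
    have hk : ∀ k, (cycleGraph 5).Adj i k ↔ (cycleGraph 5).Adj j k := by
      intro k
      rw [← key, ← key, hij]
    revert i j
    have hd : ∀ i j : Fin 5, (∀ k, (cycleGraph 5).Adj i k ↔ (cycleGraph 5).Adj j k) → i = j := by
      decide
    intro i j _ hk
    exact hd i j hk

theorem noC6 {V : Type*} {G : SimpleGraph V} (hG : IsChordal G) (a b c d e f : V)
    (hab : G.Adj a b) (hac : ¬ G.Adj a c) (had : ¬ G.Adj a d) (hae : ¬ G.Adj a e) (haf : G.Adj a f) (hbc : G.Adj b c) (hbd : ¬ G.Adj b d) (hbe : ¬ G.Adj b e) (hbf : ¬ G.Adj b f) (hcd : G.Adj c d) (hce : ¬ G.Adj c e) (hcf : ¬ G.Adj c f) (hde : G.Adj d e) (hdf : ¬ G.Adj d f) (hef : G.Adj e f)  : False := by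
  have key : ∀ i j, G.Adj (![a, b, c, d, e, f] i) (![a, b, c, d, e, f] j) ↔ (cycleGraph 6).Adj i j := by
    have hlt : ∀ i j, i < j → (G.Adj (![a, b, c, d, e, f] i) (![a, b, c, d, e, f] j) ↔ (cycleGraph 6).Adj i j) := by
      intro i j hij
      fin_cases i <;> fin_cases j <;> first
        | exact absurd hij (by decide)
        | exact iff_of_true (by assumption) (by decide)
        | exact iff_of_false (by assumption) (by decide)
    intro i j
    rcases lt_trichotomy i j with hij | hij | hij
    · exact hlt i j hij
    · subst hij
      simp
    · rw [G.adj_comm, (cycleGraph 6).adj_comm]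
      exact hlt j i hij
  refine no_emb hG 6 (by norm_num) ![a, b, c, d, e, f] ?_ key
  · skip
    intro i j hij
    have hk : ∀ k, (cycleGraph 6).Adj i k ↔ (cycleGraph 6).Adj j k := by
      intro k
      rw [← key, ← key, hij]
    revert i j
    have hd : ∀ i j : Fin 6, (∀ k, (cycleGraph 6).Adj i k ↔ (cycleGraph 6).Adj j k) → i = j := by
      decide
    intro i j _ hk
    exact hd i j hk

theorem noC7 {V : Type*} {G : SimpleGraph V} (hG : IsChordal G) (a b c d e f g : V)
    (hab : G.Adj a b) (hac : ¬ G.Adj a c) (had : ¬ G.Adj a d) (hae : ¬ G.Adj a e) (haf : ¬ G.Adj a f) (hag : G.Adj a g) (hbc : G.Adj b c) (hbd : ¬ G.Adj b d) (hbe : ¬ G.Adj b e) (hbf : ¬ G.Adj b f) (hbg : ¬ G.Adj b g) (hcd : G.Adj c d) (hce : ¬ G.Adj c e) (hcf : ¬ G.Adj c f) (hcg : ¬ G.Adj c g) (hde : G.Adj d e) (hdf : ¬ G.Adj d f) (hdg : ¬ G.Adj d g) (hef : G.Adj e f) (heg : ¬ G.Adj e g) (hfg : G.Adj f g)  : False :=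 by
  have key : ∀ i j, G.Adj (![a, b, c, d, e, f, g] i) (![a, b, c, d, e, f, g] j) ↔ (cycleGraph 7).Adj i j := by
    have hlt : ∀ i j, i < j → (G.Adj (![a, b, c, d, e, f, g] i) (![a, b, c, d, e, f, g] j) ↔ (cycleGraph 7).Adj i j) := by
      intro i j hij
      fin_cases i <;> fin_cases j <;> first
        | exact absurd hij (by decide)
        | exact iff_of_true (by assumption) (by decide)
        | exact iff_of_false (by assumption) (by decide)
    intro i j
    rcases lt_trichotomy i j with hij | hij | hij
    · exact hlt i j hij
    · subst hij
      simp
    · rw [G.adj_comm, (cycleGraph 7).adj_comm]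
      exact hlt j i hij
  refine no_emb hG 7 (by norm_num) ![a, b, c, d, e, f, g] ?_ key
  · skip
    intro i j hij
    have hk : ∀ k, (cycleGraph 7).Adj i k ↔ (cycleGraph 7).Adj j k := by
      intro k
      rw [← key, ← key, hij]
    revert i j
    have hd : ∀ i j : Fin 7, (∀ k, (cycleGraph 7).Adj i k ↔ (cycleGraph 7).Adj j k) → i = j := by
      decide
    intro i j _ hk
    exact hd i j hk

theorem m2_props {V : Type*} {G : SimpleGraph V} (hG : IsChordal G)
    {x : V} {Y : Set V} (hB : IsInducedStar G x Y) {w : V} (hw : w ∈ M2X G x Y ∪ M2Y G x Y) :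
    ¬ G.Adj w x ∧ ∀ y ∈ Y, ¬ G.Adj w y := by
  obtain ⟨hne, hxY, hxy, hYY⟩ := hB
  rcases hw with ⟨⟨_, z, ⟨⟨_, x', hx', hzx⟩, hzY, hzn, _⟩, hwz⟩, hwx, hwn, _⟩ |
    ⟨⟨_, z, ⟨⟨_, y, hy, hzy⟩, hzx, hzn, _⟩, hwz⟩, hwY, hwn, _⟩
  · obtain rfl : x' = x := hx'
    have hwn' := hwn x' rfl
    refine ⟨hwn', fun y hy hwy => ?_⟩
    exact noC4 hG w z x' y hwz hwn' hwy hzx (hzn y hy) (hxy y hy) hwx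
      (fun e => hzY (e ▸ hy))
  · refine ⟨fun hwx => ?_, hwn⟩
    exact noC4 hG w z y x hwz (hwn y hy) hwx hzy (hzn x rfl) (hxy y hy).symm
      (fun e => hwY (e ▸ hy)) hzx

theorem m1_props {V : Type*} {G : SimpleGraph V}
    {x : V} {Y : Set V} {z : V} (hz : z ∈ M1B G x Y) :
    (G.Adj z x ∧ ∀ y ∈ Y, ¬ G.Adj z y) ∨ (¬ G.Adj z x ∧ ∃ y ∈ Y, G.Adj z y) := by
  rcases hz with ⟨⟨_, x', hx', hzx⟩, hzY, hzn, _⟩ | ⟨⟨_, y, hy, hzy⟩, hzx, hzn, _⟩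
  · obtain rfl : x' = x := hx'
    exact Or.inl ⟨hzx, hzn⟩
  · exact Or.inr ⟨hzn x rfl, y, hy, hzy⟩

theorem mixed {V : Type*} {G : SimpleGraph V} (hG : IsChordal G)
    {x y z₁ z₂ w₁ w₂ : V} (hxy : G.Adj x y)
    (hx1 : ¬ G.Adj w₁ x) (hx2 : ¬ G.Adj w₂ x) (hy1 : ¬ G.Adj w₁ y) (hy2 : ¬ G.Adj w₂ y)
    (hw : G.Adj w₁ w₂) (h1 : G.Adj z₁ w₁) (h2 : G.Adj z₂ w₂)
    (h12 : ¬ G.Adj z₁ w₂) (h21 : ¬ G.Adj z₂ w₁) (hz : ¬ G.Adj z₁ z₂)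
    (a1 : G.Adj z₁ x) (b1 : ¬ G.Adj z₁ y) (a2 : ¬ G.Adj z₂ x) (b2 : G.Adj z₂ y) : False :=
  noC6 hG z₁ w₁ w₂ z₂ y x h1 h12 hz b1 a1 hw (fun h => h21 h.symm) hy1 hx1 h2.symm hy2 hx2
    b2 a2 hxy.symm

/-- If `w₁` and `w₂` are adjacent vertices of `M₂(B_X) ∪ M₂(B_Y)` then
`f(w₁) ⊆ f(w₂)` or `f(w₂) ⊆ f(w₁)`. -/
theorem stmt6 {V : Type*} (G : SimpleGraph V) (hG : IsChordal G)
    (x : V) (Y : Set V) (hB : IsInducedStar G x Y)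
    (w₁ w₂ : V) (hw₁ : w₁ ∈ M2X G x Y ∪ M2Y G x Y) (hw₂ : w₂ ∈ M2X G x Y ∪ M2Y G x Y)
    (hadj : G.Adj w₁ w₂) :
    fSet G x Y {w₁} ⊆ fSet G x Y {w₂} ∨ fSet G x Y {w₂} ⊆ fSet G x Y {w₁} := by
  by_contra hcon
  rw [not_or, Set.not_subset, Set.not_subset] at hcon
  obtain ⟨⟨z₁, ⟨⟨_, a, ha, h1⟩, hz1⟩, n1⟩, ⟨z₂, ⟨⟨_, b, hb, h2⟩, hz2⟩, n2⟩⟩ := hcon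
  obtain rfl : a = w₁ := ha
  obtain rfl : b = w₂ := hb
  obtain ⟨hx1, hY1⟩ := m2_props hG hB hw₁
  obtain ⟨hx2, hY2⟩ := m2_props hG hB hw₂
  have p1 := m1_props hz1
  have p2 := m1_props hz2
  obtain ⟨-, -, hxy, hYY⟩ := hB
  have h12 : ¬ G.Adj z₁ b := fun h => n1 ⟨⟨h.ne, b, rfl, h⟩, hz1⟩
  have h21 : ¬ G.Adj z₂ a := fun h => n2 ⟨⟨h.ne, a, rfl, h⟩, hz2⟩
  have h12' : ¬ G.Adj a z₂ := fun h => h21 h.symm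
  have e1 : z₁ ≠ b := by
    rintro rfl
    rcases p1 with ⟨h, _⟩ | ⟨_, y, hy, h⟩
    · exact hx2 h
    · exact hY2 y hy h
  have e2 : a ≠ z₂ := by
    rintro rfl
    rcases p2 with ⟨h, _⟩ | ⟨_, y, hy, h⟩
    · exact hx1 h
    · exact hY1 y hy h
  have hz : ¬ G.Adj z₁ z₂ := fun h =>
    noC4 hG z₁ a b z₂ h1 h12 h hadj h12' h2.symm e1 e2
  have c5 : ∀ v, ¬ G.Adj a v → ¬ G.Adj b v → G.Adj z₁ v → G.Adj z₂ v → False :=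
    fun v ha hb hv1 hv2 =>
      noC5 hG z₁ a b z₂ v h1 h12 hz hv1 hadj h12' ha h2.symm hb hv2
  rcases p1 with ⟨a1, b1⟩ | ⟨a1, y₁, hy₁, b1⟩ <;> rcases p2 with ⟨a2, b2⟩ | ⟨a2, y₂, hy₂, b2⟩
  · exact c5 x hx1 hx2 a1 a2
  · exact mixed hG (hxy _ hy₂) hx1 hx2 (hY1 _ hy₂) (hY2 _ hy₂) hadj h1 h2 h12 h21 hz a1
      (b1 _ hy₂) a2 b2
  · exact mixed hG (hxy _ hy₁) hx2 hx1 (hY2 _ hy₁) (hY1 _ hy₁) hadj.symm h2 h1 h21 h12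
      (fun h => hz h.symm) a2 (b2 _ hy₁) a1 b1
  · have c1 : ¬ G.Adj z₁ y₂ := fun h => c5 y₂ (hY1 _ hy₂) (hY2 _ hy₂) h b2
    have c2 : ¬ G.Adj z₂ y₁ := fun h => c5 y₁ (hY1 _ hy₁) (hY2 _ hy₁) b1 h
    exact noC7 hG z₁ a b z₂ y₂ x y₁ h1 h12 hz c1 a1 b1 hadj h12' (hY1 _ hy₂) hx1 (hY1 _ hy₁)
      h2.symm (hY2 _ hy₂) hx2 (hY2 _ hy₁) b2 a2 c2 (hxy _ hy₂).symm (hYY _ hy₂ _ hy₁) (hxy _ hy₁)
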